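/- Fix B with 1 < B < ∞ and let 𝔉₂(B) be the set of irrational x ∈ (0,1) such that for infinitely many n ∈ ℕ there exists 1 ≤ k < n − 1 with a_k(x)a_{k+1}(x) ≥ B^n and a_n(x)a_{n+1}(x) ≥ B^n. Then the Hausdorff dimension of 𝔉₂(B) is at most s_B. -/

import Mathlib

/-!
The set is covered, level by level, by pieces of cylinders.

If `a_n a_{n+1} ≥ B^n`, then one of `a_n`, `a_{n+1}` is at least `B^{n/2}`. Hence every point of
the set has, for infinitely many `L`, a product `a_k a_{k+1} ≥ B^L` with `k + 1 ≤ L`, and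
`a_{L+1} ≥ B^{L/2}` (`exists_level`). The points with a given word `a_1, …, a_L` and
`a_{L+1} ≥ B^{L/2}` form a set of diameter at most `B^{-L/2} q_L^{-2}` (`dist_le_of_cfWord_eq`).
Deleting the letters `a = a_k`, `b = a_{k+1}` divides the continuant by at least `ab / 2`
(`mul_contQ_append_le`), so for `1/2 < s ≤ 1` the `s`-th power of the diameter is at most
`4^s B^{-Ls/2} (ab)^{-2s} q_{L-2}(w)^{-2s}`, where `w` is the remaining word.

Put `t = 1 + s² - s/2`. Then `1 < t ≤ 2s`, and `ab ≥ B^L` gives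
`(ab)^{-2s} ≤ (ab)^{-t} B^{-L(2s-t)}`. As `2s - t + s/2 = 3s - 1 - s²`, summing over `a`, `b`, `w`
and the place `k` bounds the contribution of level `L` by
`4^s ζ(t)² (L - 1) ∑_w B^{-(L-2)(3s-1-s²)} q_{L-2}(w)^{-2s}`, a constant times `L - 1` times the
pressure sum (`exists_tsum_ediam_le`).

If `P_B(s') ≤ 0` and `s' < s ≤ 1`, the pressure sums at `s` decay exponentially
(`exists_presSum_le`), so the `s`-dimensional Hausdorff measure vanishes
(`dimH_le_of_pressure_le`). The remaining facts on the pressure are that `P_B(s') ≤ 0` forces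
`s' > 1/2` (`half_lt_of_pressure_le`) and that `P_B(1) ≤ 0` (`pressure_one_le`), so that the
infimum defining `s_B` is over a nonempty set. When `s_B ≥ 1` there is nothing to prove.
-/

open scoped ENNReal
open MeasureTheory Filter

/-- The Gauss map `T(x) = 1/x - ⌊1/x⌋`. -/
noncomputable def gaussMap (x : ℝ) : ℝ := 1 / x - ⌊1 / x⌋

/-- The `n`-th partial quotient `a_n(x) = ⌊1 / T^{n-1}(x)⌋` (for `n ≥ 1`). -/
noncomputable def pq (x : ℝ) (n : ℕ) : ℕ := ⌊1 / (gaussMap^[n - 1] x)⌋₊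

/-- The set `F₂(φ)` of irrational `x ∈ (0,1)` such that for infinitely many `n` there are
`1 ≤ k ≠ l ≤ n` with `a_k a_{k+1} ≥ φ(n)` and `a_l a_{l+1} ≥ φ(n)`. -/
def F2 (φ : ℕ → ℝ) : Set ℝ :=
  {x | x ∈ Set.Ioo (0 : ℝ) 1 ∧ Irrational x ∧
    {n : ℕ | ∃ k l : ℕ, 1 ≤ k ∧ k ≤ n ∧ 1 ≤ l ∧ l ≤ n ∧ k ≠ l ∧
      φ n ≤ (pq x k : ℝ) * (pq x (k + 1) : ℝ) ∧
      φ n ≤ (pq x l : ℝ) * (pq x (l + 1) : ℝ)}.Infinite}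

/-- The continuant `q_n(a_1,…,a_n)` of a word, via `q_{-1} = 0`, `q_0 = 1`,
`q_n = a_n q_{n-1} + q_{n-2}` (the pair holds `(q_{k}, q_{k-1})`). -/
def contQ (l : List ℕ) : ℕ :=
  (l.foldl (fun p a => (a * p.1 + p.2, p.1)) ((1 : ℕ), (0 : ℕ))).1

/-- `Σ_{(a_1,…,a_n) ∈ ℕⁿ} B^{-n(3s-1-s²)} q_n(a_1,…,a_n)^{-2s}` as an extended nonnegative
real number. -/
noncomputable def presSum (B s : ℝ) (n : ℕ) : ℝ≥0∞ :=
  ∑' v : Fin n → ℕ+,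
    ENNReal.ofReal (B ^ (-(n : ℝ) * (3 * s - 1 - s ^ 2)) *
      (contQ (List.ofFn fun i => ((v i : ℕ))) : ℝ) ^ (-(2 * s)))

/-- The pressure function `P_B(s) = lim_n (1/n) log presSum B s n ∈ (-∞,∞]`
(the limit exists, hence equals the `limsup`). -/
noncomputable def pressure (B s : ℝ) : EReal :=
  Filter.atTop.limsup fun n : ℕ => (((n : ℝ)⁻¹ : ℝ) : EReal) * ENNReal.log (presSum B s n)

/-- `s_B = inf {s ≥ 0 : P_B(s) ≤ 0}`. -/
noncomputable def sB (B : ℝ) : ℝ := sInf {s : ℝ | 0 ≤ s ∧ pressure B s ≤ 0}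

/-! ### Continuants -/

/-- One step `(q_k, q_{k-1}) ↦ (a q_k + q_{k-1}, q_k)` of the continuant recursion. -/
def contStep (p : ℕ × ℕ) (a : ℕ) : ℕ × ℕ := (a * p.1 + p.2, p.1)

/-- The pair `(q_n, q_{n-1})` reached from the pair `p` after reading the word `l`. -/
def contState (p : ℕ × ℕ) (l : List ℕ) : ℕ × ℕ := l.foldl contStep p

lemma contQ_eq (l : List ℕ) : contQ l = (contState (1, 0) l).1 := rfl

lemma contState_cons (p : ℕ × ℕ) (a : ℕ) (l : List ℕ) :
    contState p (a :: l) = contState (contStep p a) l := rfl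

lemma contState_append (p : ℕ × ℕ) (l m : List ℕ) :
    contState p (l ++ m) = contState (contState p l) m := by
  simp [contState]

lemma contState_mono {p r : ℕ × ℕ} (h1 : p.1 ≤ r.1) (h2 : p.2 ≤ r.2) (l : List ℕ) :
    (contState p l).1 ≤ (contState r l).1 := by
  induction l generalizing p r with
  | nil => exact h1
  | cons a l ih =>
    rw [contState_cons, contState_cons]
    refine ih ?_ h1
    simp only [contStep]
    gcongr

lemma contState_smul (c : ℕ) (p : ℕ × ℕ) (l : List ℕ) :
    (contState (c * p.1, c * p.2) l).1 = c * (contState p l).1 := by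
  induction l generalizing p with
  | nil => rfl
  | cons a l ih =>
    rw [contState_cons, contState_cons, ← ih]
    congr 2
    simp only [contStep]
    ext <;> simp
    ring

/-- Dropping the second coordinate of a state `(x, y)` with `y ≤ x` costs at most a factor `2`. -/
lemma contState_le_two_mul {x y : ℕ} (h : y ≤ x) (l : List ℕ) (hl : ∀ a ∈ l, 1 ≤ a) :
    (contState (x, y) l).1 ≤ (contState (2 * x, 0) l).1 := by
  cases l with
  | nil => simp [contState]; omega
  | cons a l =>
    have ha := hl a (by simp)
    rw [contState_cons, contState_cons]
    apply contState_mono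
    · simp only [contStep]; nlinarith
    · simp only [contStep]; omega

lemma contState_snd_le {p : ℕ × ℕ} (h : p.2 ≤ p.1) (l : List ℕ) (hl : ∀ a ∈ l, 1 ≤ a) :
    (contState p l).2 ≤ (contState p l).1 := by
  induction l generalizing p with
  | nil => exact h
  | cons a l ih =>
    rw [contState_cons]
    refine ih ?_ fun b hb => hl b (by simp [hb])
    have ha := hl a (by simp)
    simp only [contStep]; nlinarith

lemma contState_fst_pos {p : ℕ × ℕ} (h : 0 < p.1) (l : List ℕ) (hl : ∀ a ∈ l, 1 ≤ a) :
    0 < (contState p l).1 := by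
  induction l generalizing p with
  | nil => exact h
  | cons a l ih =>
    rw [contState_cons]
    refine ih ?_ fun b hb => hl b (by simp [hb])
    have ha := hl a (by simp)
    simp only [contStep]; positivity

/-- Deleting two adjacent letters `a, b` divides the continuant by at least `ab / 2`. -/
lemma mul_contQ_append_le (l m : List ℕ) (a b : ℕ) (hl : ∀ c ∈ l, 1 ≤ c) (hm : ∀ c ∈ m, 1 ≤ c) :
    a * b * contQ (l ++ m) ≤ 2 * contQ (l ++ a :: b :: m) := by
  simp only [contQ_eq, contState_append, contState_cons]
  have hs := contState_snd_le (p := (1, 0)) (by simp) l hl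
  generalize contState (1, 0) l = p at hs ⊢
  obtain ⟨q, r⟩ := p
  simp only at hs
  rw [← contState_smul, ← contState_smul]
  refine (contState_le_two_mul (Nat.mul_le_mul_left _ hs) m hm).trans (contState_mono ?_ ?_ m)
  · simp only [contStep]
    nlinarith [Nat.zero_le (b * r), Nat.zero_le q]
  · simp

lemma contQ_ofFn_pos {n : ℕ} (v : Fin n → ℕ+) :
    0 < contQ (List.ofFn fun i => ((v i : ℕ))) := by
  rw [contQ_eq]
  refine contState_fst_pos (by simp) _ ?_
  simp only [List.mem_ofFn]
  rintro a ⟨i, rfl⟩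
  exact (v i).pos

/-! ### The Gauss map and cylinders -/

lemma gaussMap_mem {x : ℝ} (hx : x ∈ Set.Ioo (0 : ℝ) 1 ∧ Irrational x) :
    gaussMap x ∈ Set.Ioo (0 : ℝ) 1 ∧ Irrational (gaussMap x) := by
  obtain ⟨hx, hi⟩ := hx
  have h2 : Irrational (gaussMap x) := by
    unfold gaussMap
    rw [one_div]
    exact hi.inv.sub_intCast _
  refine ⟨⟨lt_of_le_of_ne (Int.fract_nonneg (1 / x)) ?_, Int.fract_lt_one (1 / x)⟩, h2⟩
  exact fun h => h2 ⟨0, by simpa using h⟩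

lemma gaussMap_iterate_mem {x : ℝ} (hx : x ∈ Set.Ioo (0 : ℝ) 1 ∧ Irrational x) (n : ℕ) :
    gaussMap^[n] x ∈ Set.Ioo (0 : ℝ) 1 ∧ Irrational (gaussMap^[n] x) := by
  induction n with
  | zero => exact hx
  | succ n ih => rw [Function.iterate_succ_apply']; exact gaussMap_mem ih

lemma pq_pos {x : ℝ} (hx : x ∈ Set.Ioo (0 : ℝ) 1 ∧ Irrational x) (n : ℕ) : 1 ≤ pq x n := by
  obtain ⟨⟨h0, h1⟩, -⟩ := gaussMap_iterate_mem hx (n - 1)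
  refine Nat.le_floor ?_
  rw [Nat.cast_one, le_div_iff₀ h0]
  linarith

lemma one_div_gaussMap_iterate {x : ℝ} (hx : x ∈ Set.Ioo (0 : ℝ) 1 ∧ Irrational x) (n : ℕ) :
    1 / gaussMap^[n] x = pq x (n + 1) + gaussMap^[n + 1] x := by
  obtain ⟨⟨h0, h1⟩, -⟩ := gaussMap_iterate_mem hx n
  rw [Function.iterate_succ_apply']
  have : ((pq x (n + 1) : ℕ) : ℝ) = ((⌊1 / gaussMap^[n] x⌋ : ℤ) : ℝ) := by
    simp only [pq, Nat.add_sub_cancel]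
    exact natCast_floor_eq_intCast_floor (by positivity)
  rw [this, gaussMap]
  ring

/-- The word `a_1(x), …, a_n(x)`. -/
noncomputable def cfWord (x : ℝ) (n : ℕ) : List ℕ := (List.range n).map fun i => pq x (i + 1)

lemma cfWord_succ (x : ℝ) (n : ℕ) : cfWord x (n + 1) = cfWord x n ++ [pq x (n + 1)] := by
  simp [cfWord, List.range_succ]

/-- The Möbius distortion identity on a cylinder: the inverse branch of `T^n` contracts the
distance of `T^n x` and `T^n y` by exactly `(q_n + q_{n-1} T^n x)(q_n + q_{n-1} T^n y)`. -/
lemma dist_mul_eq {x y : ℝ} (hx : x ∈ Set.Ioo (0 : ℝ) 1 ∧ Irrational x)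
    (hy : y ∈ Set.Ioo (0 : ℝ) 1 ∧ Irrational y) (n : ℕ) (h : cfWord x n = cfWord y n) :
    |x - y| * (((contState (1, 0) (cfWord x n)).1 + (contState (1, 0) (cfWord x n)).2 *
        gaussMap^[n] x) * ((contState (1, 0) (cfWord x n)).1 +
        (contState (1, 0) (cfWord x n)).2 * gaussMap^[n] y)) =
      |gaussMap^[n] x - gaussMap^[n] y| := by
  induction n with
  | zero => simp [cfWord, contState]
  | succ n ih =>
    rw [cfWord_succ, cfWord_succ] at h
    have h' := List.append_inj h (by simp [cfWord])
    have hpq : pq x (n + 1) = pq y (n + 1) := by simpa using h'.2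
    have ih := ih h'.1
    rw [cfWord_succ, contState_append]
    generalize contState (1, 0) (cfWord x n) = p at ih ⊢
    obtain ⟨q, r⟩ := p
    have ex := one_div_gaussMap_iterate hx n
    have ey := one_div_gaussMap_iterate hy n
    rw [← hpq] at ey
    obtain ⟨⟨u0, -⟩, -⟩ := gaussMap_iterate_mem hx n
    obtain ⟨⟨v0, -⟩, -⟩ := gaussMap_iterate_mem hy n
    set u := gaussMap^[n] x
    set v := gaussMap^[n] y
    set u' := gaussMap^[n + 1] x
    set v' := gaussMap^[n + 1] y
    set a := pq x (n + 1)
    have eu : u' = 1 / u - a := by linarith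
    have ev : v' = 1 / v - a := by linarith
    have e1 : u' - v' = (v - u) / (u * v) := by rw [eu, ev]; field_simp; ring
    rw [e1, abs_div, abs_of_pos (mul_pos u0 v0), abs_sub_comm v u, ← ih]
    simp only [contState, List.foldl, contStep]
    rw [eu, ev]
    push_cast
    field_simp
    ring

lemma dist_le_of_cfWord_eq {x y : ℝ} (hx : x ∈ Set.Ioo (0 : ℝ) 1 ∧ Irrational x)
    (hy : y ∈ Set.Ioo (0 : ℝ) 1 ∧ Irrational y) (n : ℕ) (h : cfWord x n = cfWord y n)
    {M : ℝ} (hM : 0 < M) (hxM : M ≤ pq x (n + 1)) (hyM : M ≤ pq y (n + 1)) :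
    dist x y ≤ M⁻¹ * ((contQ (cfWord x n) : ℝ) ^ 2)⁻¹ := by
  have key := dist_mul_eq hx hy n h
  have hq : 0 < contQ (cfWord x n) := by
    refine contState_fst_pos (by simp) _ ?_
    intro a ha
    simp only [cfWord, List.mem_map] at ha
    obtain ⟨i, -, rfl⟩ := ha
    exact pq_pos hx _
  have bound : ∀ z : ℝ, z ∈ Set.Ioo (0 : ℝ) 1 ∧ Irrational z → M ≤ pq z (n + 1) →
      0 < gaussMap^[n] z ∧ gaussMap^[n] z ≤ M⁻¹ := by
    intro z hz hzM
    obtain ⟨⟨u0, -⟩, -⟩ := gaussMap_iterate_mem hz n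
    obtain ⟨⟨u1, -⟩, -⟩ := gaussMap_iterate_mem hz (n + 1)
    have e := one_div_gaussMap_iterate hz n
    refine ⟨u0, ?_⟩
    rw [le_inv_comm₀ u0 hM, ← one_div]
    linarith
  obtain ⟨u0, u1⟩ := bound x hx hxM
  obtain ⟨v0, v1⟩ := bound y hy hyM
  rw [contQ_eq] at hq ⊢
  generalize contState (1, 0) (cfWord x n) = p at key hq ⊢
  obtain ⟨q, r⟩ := p
  simp only at key hq ⊢
  have hq' : (0 : ℝ) < q := by exact_mod_cast hq
  have hr : (0 : ℝ) ≤ r := by positivity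
  rw [Real.dist_eq, ← div_eq_mul_inv, le_div_iff₀ (by positivity)]
  calc |x - y| * (q : ℝ) ^ 2 ≤ |x - y| * ((q + r * gaussMap^[n] x) * (q + r * gaussMap^[n] y)) := by
        rw [sq]
        have h1 : 0 ≤ r * gaussMap^[n] x := by positivity
        have h2 : 0 ≤ r * gaussMap^[n] y := by positivity
        gcongr <;> linarith
    _ = |gaussMap^[n] x - gaussMap^[n] y| := key
    _ ≤ M⁻¹ := by rw [abs_le]; constructor <;> linarith

/-! ### The pressure function -/

/-- Splitting off the first letter of a sum over words. -/
lemma tsum_word_succ {n : ℕ} (f : List ℕ → ℝ≥0∞) :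
    ∑' v : Fin (n + 1) → ℕ+, f (List.ofFn fun i => ((v i : ℕ))) =
      ∑' a : ℕ+, ∑' v : Fin n → ℕ+, f ((a : ℕ) :: List.ofFn fun i => ((v i : ℕ))) := by
  rw [← (Fin.consEquiv fun _ : Fin (n + 1) => ℕ+).tsum_eq, ← ENNReal.tsum_prod]
  refine tsum_congr fun p => ?_
  rw [List.ofFn_succ]
  simp [Fin.consEquiv]

/-- The sum telescopes. In terms of cylinders: the lengths of the subcylinders of a cylinder add up
to at most the length of the cylinder. -/
lemma tsum_telescope {q r : ℕ} (hq : 0 < q) :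
    ∑' a : ℕ+, ENNReal.ofReal (1 / (((a : ℕ) * q + r : ℝ) * (((a : ℕ) * q + r : ℝ) + q))) ≤
      ENNReal.ofReal (1 / ((q : ℝ) * (q + r))) := by
  have hq' : (0 : ℝ) < q := by exact_mod_cast hq
  have hr : (0 : ℝ) ≤ r := by positivity
  rw [tsum_pnat_eq_tsum_succ
    (f := fun a : ℕ => ENNReal.ofReal (1 / ((a * q + r : ℝ) * ((a * q + r : ℝ) + q))))]
  refine ENNReal.tsum_le_of_sum_range_le fun N => ?_
  rw [← ENNReal.ofReal_sum_of_nonneg (fun i _ => by positivity)]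
  refine ENNReal.ofReal_le_ofReal ?_
  have : ∑ i ∈ Finset.range N, 1 / ((((i + 1 : ℕ) : ℝ) * q + r : ℝ) *
        ((((i + 1 : ℕ) : ℝ) * q + r : ℝ) + q)) =
      1 / ((q : ℝ) * (q + r)) - 1 / (q * ((N + 1) * q + r)) := by
    induction N with
    | zero => simp
    | succ N ih =>
      rw [Finset.sum_range_succ, ih]
      push_cast
      have : (0 : ℝ) < (N + 1) * q + r := by positivity
      field_simp
      ring
  rw [this]
  have : 0 ≤ 1 / ((q : ℝ) * ((N + 1) * q + r)) := by positivity
  linarith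

lemma tsum_cylinder_le (n : ℕ) (p : ℕ × ℕ) (hp : 0 < p.1) :
    ∑' v : Fin n → ℕ+, ENNReal.ofReal
      (1 / (((contState p (List.ofFn fun i => ((v i : ℕ)))).1 : ℝ) *
        ((contState p (List.ofFn fun i => ((v i : ℕ)))).1 +
          (contState p (List.ofFn fun i => ((v i : ℕ)))).2))) ≤
      ENNReal.ofReal (1 / ((p.1 : ℝ) * (p.1 + p.2))) := by
  induction n generalizing p with
  | zero => simp [contState]
  | succ n ih =>
    rw [tsum_word_succ (fun l => ENNReal.ofReal
      (1 / (((contState p l).1 : ℝ) * ((contState p l).1 + (contState p l).2))))]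
    refine le_trans (ENNReal.tsum_le_tsum fun a => ?_) (tsum_telescope (r := p.2) hp)
    simp only [contState_cons]
    refine (ih (contStep p a) ?_).trans ?_
    · have := a.pos
      simp only [contStep]
      positivity
    · simp [contStep]

/-- At `s = 1` the words of each length contribute at most twice the total length of `(0,1)`. -/
lemma presSum_one_le {B : ℝ} (hB : 1 < B) (n : ℕ) : presSum B 1 n ≤ 2 := by
  have h := tsum_cylinder_le n (1, 0) (by simp)
  calc presSum B 1 n
    _ ≤ ∑' v : Fin n → ℕ+, 2 * ENNReal.ofReal
          (1 / (((contState (1, 0) (List.ofFn fun i => ((v i : ℕ)))).1 : ℝ) *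
            ((contState (1, 0) (List.ofFn fun i => ((v i : ℕ)))).1 +
              (contState (1, 0) (List.ofFn fun i => ((v i : ℕ)))).2))) := by
        refine ENNReal.tsum_le_tsum fun v => ?_
        have hq := contQ_ofFn_pos v
        have hle := contState_snd_le (p := (1, 0)) (by simp) (List.ofFn fun i => ((v i : ℕ)))
          (by simp only [List.mem_ofFn]; rintro a ⟨i, rfl⟩; exact (v i).pos)
        rw [contQ_eq] at hq ⊢
        generalize contState (1, 0) (List.ofFn fun i => ((v i : ℕ))) = p at hq hle ⊢
        have hq' : (0 : ℝ) < p.1 := by exact_mod_cast hq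
        have hle' : (p.2 : ℝ) ≤ p.1 := by exact_mod_cast hle
        have h2 : (0 : ℝ) ≤ p.2 := by positivity
        rw [← ENNReal.ofReal_ofNat 2, ← ENNReal.ofReal_mul (by norm_num)]
        refine ENNReal.ofReal_le_ofReal ?_
        have e1 : B ^ (-(n : ℝ) * (3 * 1 - 1 - 1 ^ 2)) ≤ 1 :=
          Real.rpow_le_one_of_one_le_of_nonpos hB.le
            (by have : (0 : ℝ) ≤ n := by positivity
                linarith)
        have e2 : (p.1 : ℝ) ^ (-(2 * 1) : ℝ) = 1 / ((p.1 : ℝ) * p.1) := by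
          rw [Real.rpow_neg hq'.le, mul_one, Real.rpow_two, sq, one_div]
        rw [e2]
        calc _ ≤ 1 * (1 / ((p.1 : ℝ) * p.1)) := by gcongr
          _ ≤ _ := by
            rw [one_mul, ← mul_div_assoc, div_le_div_iff₀ (by positivity) (by positivity)]
            nlinarith
    _ ≤ 2 * ENNReal.ofReal (1 / (((1 : ℕ) : ℝ) * ((1 : ℕ) + (0 : ℕ)))) := by
        rw [ENNReal.tsum_mul_left]
        gcongr
    _ = 2 := by simp

/-- A bound `P_B(s) ≤ 0` makes the pressure sums grow at most subexponentially. -/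
lemma eventually_presSum_le {B s δ : ℝ} (h : pressure B s ≤ 0) (hδ : 0 < δ) :
    ∀ᶠ n in atTop, presSum B s n ≤ ENNReal.ofReal (Real.exp (δ * n)) := by
  have h1 : pressure B s < (δ : EReal) := h.trans_lt (by exact_mod_cast hδ)
  have h2 := Filter.eventually_lt_of_limsup_lt h1
  filter_upwards [h2, eventually_ge_atTop 1] with n hn hn1
  have hn0 : (n : ℝ) ≠ 0 := by positivity
  have e : (δ : EReal) = ENNReal.log (ENNReal.ofReal (Real.exp δ)) := by
    rw [ENNReal.log_ofReal_of_pos (Real.exp_pos _), Real.log_exp]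
  rw [← ENNReal.log_rpow, e, ENNReal.log_lt_log_iff] at hn
  have h3 := ENNReal.rpow_le_rpow hn.le (z := (n : ℝ)) (by positivity)
  rwa [← ENNReal.rpow_mul, inv_mul_cancel₀ hn0, ENNReal.rpow_one,
    ENNReal.ofReal_rpow_of_pos (Real.exp_pos _), ← Real.exp_mul] at h3

lemma pressure_one_le {B : ℝ} (hB : 1 < B) : pressure B 1 ≤ 0 := by
  have hlim : Tendsto (fun n : ℕ => (((n : ℝ)⁻¹ * Real.log 2 : ℝ) : EReal)) atTop (nhds 0) := by
    rw [← EReal.coe_zero]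
    refine EReal.tendsto_coe.2 ?_
    simpa using (tendsto_inv_atTop_nhds_zero_nat (𝕜 := ℝ)).mul_const (Real.log 2)
  rw [← hlim.limsup_eq]
  refine Filter.limsup_le_limsup (Eventually.of_forall fun n => ?_)
  have h2 : ENNReal.log 2 = ((Real.log 2 : ℝ) : EReal) := by
    rw [← ENNReal.ofReal_ofNat 2, ENNReal.log_ofReal_of_pos (by norm_num)]
  simp only [EReal.coe_mul, ← h2]
  exact mul_le_mul_of_nonneg_left (ENNReal.log_le_log (presSum_one_le hB n))
    (by exact_mod_cast (by positivity : (0 : ℝ) ≤ (n : ℝ)⁻¹))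

/-- The pressure sums diverge for `s ≤ 1/2`, already along the words `a, 1, …, 1`. -/
lemma half_lt_of_presSum_ne_top {B s : ℝ} (hB : 1 < B) (hs : 0 ≤ s) {n : ℕ}
    (h : presSum B s (n + 1) ≠ ⊤) : 1 / 2 < s := by
  set K := contQ (List.ofFn fun i : Fin (n + 1) => (((1 : ℕ+)) : ℕ)) with hK
  have hK0 : 0 < K := contQ_ofFn_pos (fun _ => 1)
  have hB0 : (0 : ℝ) < B := by linarith
  set c := B ^ (-((n + 1 : ℕ) : ℝ) * (3 * s - 1 - s ^ 2)) with hc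
  have hc0 : 0 < c := Real.rpow_pos_of_pos hB0 _
  let w : ℕ → (Fin (n + 1) → ℕ+) := fun a => Fin.cons a.succPNat fun _ => 1
  have hw : Function.Injective w := by
    intro a b hab
    have := congrFun hab 0
    simpa [w] using this
  have h1 := ENNReal.tsum_comp_le_tsum_of_injective hw fun v : Fin (n + 1) → ℕ+ =>
    ENNReal.ofReal (c * (contQ (List.ofFn fun i => ((v i : ℕ))) : ℝ) ^ (-(2 * s)))
  have hterm : ∀ a : ℕ, ENNReal.ofReal (c * (K : ℝ) ^ (-(2 * s)) * ((a + 1 : ℕ) : ℝ) ^ (-(2 * s))) ≤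
      ENNReal.ofReal (c * (contQ (List.ofFn fun i => ((w a i : ℕ))) : ℝ) ^ (-(2 * s))) := by
    intro a
    refine ENNReal.ofReal_le_ofReal ?_
    rw [mul_assoc, ← Real.mul_rpow (by positivity) (by positivity)]
    refine mul_le_mul_of_nonneg_left ?_ hc0.le
    have hpos := contQ_ofFn_pos (w a)
    refine Real.rpow_le_rpow_of_nonpos (by exact_mod_cast hpos) ?_ (by linarith)
    have : contQ (List.ofFn fun i => ((w a i : ℕ))) ≤ (a + 1) * K := by
      rw [hK, contQ_eq, contQ_eq, ← contState_smul, List.ofFn_succ, List.ofFn_succ,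
        contState_cons, contState_cons]
      simp only [w, Fin.cons_zero, Fin.cons_succ]
      apply contState_mono <;> simp [contStep]
    calc ((contQ (List.ofFn fun i => ((w a i : ℕ))) : ℕ) : ℝ) ≤ (((a + 1) * K : ℕ) : ℝ) := by
          exact_mod_cast this
      _ = _ := by push_cast; ring
  have h2 : ∑' a : ℕ, ENNReal.ofReal (c * (K : ℝ) ^ (-(2 * s)) * ((a + 1 : ℕ) : ℝ) ^ (-(2 * s))) ≠ ⊤ :=
    ne_top_of_le_ne_top h ((ENNReal.tsum_le_tsum hterm).trans h1)
  have hK' : 0 < c * (K : ℝ) ^ (-(2 * s)) := mul_pos hc0 (Real.rpow_pos_of_pos (by exact_mod_cast hK0) _)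
  have h3 : Summable fun a : ℕ => c * (K : ℝ) ^ (-(2 * s)) * ((a + 1 : ℕ) : ℝ) ^ (-(2 * s)) := by
    have := ENNReal.summable_toReal h2
    refine this.congr fun a => ?_
    rw [ENNReal.toReal_ofReal]
    positivity
  rw [summable_mul_left_iff hK'.ne', summable_nat_add_iff 1 (f := fun a : ℕ => (a : ℝ) ^ (-(2 * s))),
    Real.summable_nat_rpow] at h3
  linarith

lemma half_lt_of_pressure_le {B s : ℝ} (hB : 1 < B) (hs : 0 ≤ s) (h : pressure B s ≤ 0) :
    1 / 2 < s := by
  obtain ⟨n, hn, hn1⟩ := ((eventually_presSum_le h one_pos).and (eventually_ge_atTop 1)).exists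
  obtain ⟨n, rfl⟩ := Nat.exists_eq_add_of_le' hn1
  exact half_lt_of_presSum_ne_top hB hs (ne_top_of_le_ne_top ENNReal.ofReal_ne_top hn)

lemma presSum_le_mul {B s s' : ℝ} (hB : 1 < B) (hss : s' ≤ s) (n : ℕ) :
    presSum B s n ≤ ENNReal.ofReal
      (Real.exp (-(Real.log B * ((3 * s - s ^ 2) - (3 * s' - s' ^ 2))) * n)) * presSum B s' n := by
  have hB0 : (0 : ℝ) < B := by linarith
  rw [presSum, presSum, ← ENNReal.tsum_mul_left]
  refine ENNReal.tsum_le_tsum fun v => ?_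
  rw [← ENNReal.ofReal_mul (Real.exp_pos _).le]
  refine ENNReal.ofReal_le_ofReal ?_
  rw [← mul_assoc]
  have hq : (1 : ℝ) ≤ contQ (List.ofFn fun i => ((v i : ℕ))) := by
    exact_mod_cast contQ_ofFn_pos v
  have e : B ^ (-(n : ℝ) * (3 * s - 1 - s ^ 2)) =
      Real.exp (-(Real.log B * ((3 * s - s ^ 2) - (3 * s' - s' ^ 2))) * n) *
        B ^ (-(n : ℝ) * (3 * s' - 1 - s' ^ 2)) := by
    rw [Real.rpow_def_of_pos hB0, Real.rpow_def_of_pos hB0, ← Real.exp_add]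
    congr 1
    ring
  rw [e]
  refine mul_le_mul_of_nonneg_left (Real.rpow_le_rpow_of_exponent_le hq (by linarith)) ?_
  have := Real.rpow_pos_of_pos hB0 (-(n : ℝ) * (3 * s' - 1 - s' ^ 2))
  positivity

/-- Beyond a parameter with nonpositive pressure, and up to `1`, the pressure sums decay exponentially. -/
lemma exists_presSum_le {B s s' : ℝ} (hB : 1 < B) (hss : s' < s) (hs1 : s ≤ 1)
    (h : pressure B s' ≤ 0) :
    ∃ δ > 0, ∀ᶠ n in atTop, presSum B s n ≤ ENNReal.ofReal (Real.exp (-δ * (n : ℕ))) := by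
  set D := Real.log B * ((3 * s - s ^ 2) - (3 * s' - s' ^ 2)) with hD
  have hD0 : 0 < D := by
    refine mul_pos (Real.log_pos hB) ?_
    nlinarith
  refine ⟨D / 2, by positivity, ?_⟩
  filter_upwards [eventually_presSum_le h (half_pos hD0)] with n hn
  refine (presSum_le_mul hB hss.le n).trans ?_
  calc _ ≤ ENNReal.ofReal (Real.exp (-D * n)) * ENNReal.ofReal (Real.exp (D / 2 * n)) := by
        gcongr
    _ = _ := by
        rw [← ENNReal.ofReal_mul (Real.exp_pos _).le, ← Real.exp_add]
        congr 2
        ring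

/-! ### The covering -/

/-- The word `l` with the two letters `a, b` inserted after its first `k` letters. -/
def insPair (k a b : ℕ) (l : List ℕ) : List ℕ := l.take k ++ a :: b :: l.drop k

/-- Indices of the sets covering the points with a large product `a_k a_{k+1}` in the first `n + 2`
partial quotients and a large `a_{n+3}`: the place `k` of the large product, the two letters
`a_k, a_{k+1}`, and the remaining word of length `n`. -/
abbrev CoverIdx (n : ℕ) : Type := Fin (n + 1) × (ℕ+ × ℕ+) × (Fin n → ℕ+)

/-- The part of the cylinder of length `n + 2` described by the index `i` on which
`a_{n+3} ≥ B^{(n+2)/2}`; it is empty unless the two inserted letters have product at least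
`B^{n+2}`. -/
def coverSet (B : ℝ) (n : ℕ) (i : CoverIdx n) : Set ℝ :=
  {x | (x ∈ Set.Ioo (0 : ℝ) 1 ∧ Irrational x) ∧
    B ^ (n + 2) ≤ ((i.2.1.1 : ℕ) : ℝ) * ((i.2.1.2 : ℕ) : ℝ) ∧
    cfWord x (n + 2) = insPair i.1 i.2.1.1 i.2.1.2 (List.ofFn fun j => ((i.2.2 j : ℕ))) ∧
    B ^ (((n + 2 : ℕ) : ℝ) / 2) ≤ pq x (n + 3)}

lemma ediam_coverSet_le {B : ℝ} (hB : 1 < B) (n : ℕ) (i : CoverIdx n) :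
    Metric.ediam (coverSet B n i) ≤ ENNReal.ofReal ((B ^ (((n + 2 : ℕ) : ℝ) / 2))⁻¹ *
      ((contQ (insPair i.1 i.2.1.1 i.2.1.2 (List.ofFn fun j => ((i.2.2 j : ℕ)))) : ℝ) ^ 2)⁻¹) := by
  refine Metric.ediam_le_of_forall_dist_le ?_
  rintro x ⟨hx, -, hxw, hxM⟩ y ⟨hy, -, hyw, hyM⟩
  rw [← hxw]
  exact dist_le_of_cfWord_eq hx hy (n + 2) (hxw.trans hyw.symm)
    (Real.rpow_pos_of_pos (by linarith) _) hxM hyM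

lemma ediam_coverSet_le' {B : ℝ} (hB : 1 < B) (n : ℕ) (i : CoverIdx n) :
    Metric.ediam (coverSet B n i) ≤ ENNReal.ofReal ((B ^ (((n + 2 : ℕ) : ℝ) / 2))⁻¹) := by
  refine (ediam_coverSet_le hB n i).trans (ENNReal.ofReal_le_ofReal ?_)
  have h1 : 0 < B ^ (((n + 2 : ℕ) : ℝ) / 2) := Real.rpow_pos_of_pos (by linarith) _
  refine mul_le_of_le_one_right (by positivity) ?_
  exact_mod_cast Nat.cast_inv_le_one (α := ℝ) _

/-- The real-variable estimate behind `ediam_coverSet_rpow_le`. The exponent `t = 1 + s² - s/2`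
satisfies `2s - t + s/2 = 3s - 1 - s²`, while `1 < t ≤ 2s` for `1/2 < s ≤ 1`. -/
lemma rpow_bound {B s P q Q L L' : ℝ} (hB : 1 < B) (hs : 1 / 2 < s) (hs1 : s ≤ 1)
    (hP : B ^ L ≤ P) (hq : 0 < q) (hQ : P * q ≤ 2 * Q) (hL : L' ≤ L) :
    ((B ^ (L / 2))⁻¹ * (Q ^ 2)⁻¹) ^ s ≤
      4 ^ s * P ^ (-(1 + s ^ 2 - s / 2)) * (B ^ (-L' * (3 * s - 1 - s ^ 2)) * q ^ (-(2 * s))) := by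
  have hB0 : 0 < B := by linarith
  have hBL : 0 < B ^ L := Real.rpow_pos_of_pos hB0 _
  have hBL2 : 0 < B ^ (L / 2) := Real.rpow_pos_of_pos hB0 _
  have hP0 : 0 < P := hBL.trans_le hP
  have hQ0 : 0 < Q := by have := mul_pos hP0 hq; linarith
  have hPq : (Q ^ 2)⁻¹ ≤ 4 * ((P * q) ^ 2)⁻¹ := by
    have : 0 < P * q := mul_pos hP0 hq
    rw [← div_eq_mul_inv, inv_eq_one_div, div_le_div_iff₀ (by positivity) (by positivity)]
    nlinarith
  have hr : ∀ {y : ℝ}, 0 < y → ((y ^ 2)⁻¹) ^ s = y ^ (-(2 * s)) := by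
    intro y hy
    rw [← Real.rpow_natCast, ← Real.rpow_neg hy.le, ← Real.rpow_mul hy.le]
    congr 1
    push_cast
    ring
  calc ((B ^ (L / 2))⁻¹ * (Q ^ 2)⁻¹) ^ s
    _ ≤ ((B ^ (L / 2))⁻¹ * (4 * ((P * q) ^ 2)⁻¹)) ^ s := by gcongr
    _ = 4 ^ s * (P ^ (-(1 + s ^ 2 - s / 2)) * P ^ (-(2 * s - (1 + s ^ 2 - s / 2)))) *
          (B ^ (-(L * s / 2)) * q ^ (-(2 * s))) := by
        rw [Real.mul_rpow (by positivity) (by positivity), Real.mul_rpow (by norm_num)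
          (by positivity), hr (mul_pos hP0 hq), Real.mul_rpow hP0.le hq.le, ← Real.rpow_add hP0,
          ← Real.rpow_neg hB0.le, ← Real.rpow_mul hB0.le]
        ring_nf
    _ ≤ 4 ^ s * (P ^ (-(1 + s ^ 2 - s / 2)) * (B ^ L) ^ (-(2 * s - (1 + s ^ 2 - s / 2)))) *
          (B ^ (-(L * s / 2)) * q ^ (-(2 * s))) := by
        gcongr 4 ^ s * (_ * ?_) * _
        refine Real.rpow_le_rpow_of_nonpos hBL hP ?_
        nlinarith
    _ = 4 ^ s * P ^ (-(1 + s ^ 2 - s / 2)) * (B ^ (-L * (3 * s - 1 - s ^ 2)) * q ^ (-(2 * s))) := by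
        have : B ^ (-L * (3 * s - 1 - s ^ 2)) =
            (B ^ L) ^ (-(2 * s - (1 + s ^ 2 - s / 2))) * B ^ (-(L * s / 2)) := by
          rw [← Real.rpow_mul hB0.le, ← Real.rpow_add hB0]
          congr 1
          ring
        rw [this]
        ring
    _ ≤ _ := by
        gcongr
        · exact hB.le
        · nlinarith

lemma ediam_coverSet_rpow_le {B s : ℝ} (hB : 1 < B) (hs : 1 / 2 < s) (hs1 : s ≤ 1) (n : ℕ)
    (i : CoverIdx n) :
    Metric.ediam (coverSet B n i) ^ s ≤
      ENNReal.ofReal (4 ^ s) * (ENNReal.ofReal (((i.2.1.1 : ℕ) : ℝ) ^ (-(1 + s ^ 2 - s / 2))) *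
        ENNReal.ofReal (((i.2.1.2 : ℕ) : ℝ) ^ (-(1 + s ^ 2 - s / 2))) *
        ENNReal.ofReal (B ^ (-(n : ℝ) * (3 * s - 1 - s ^ 2)) *
          (contQ (List.ofFn fun j => ((i.2.2 j : ℕ))) : ℝ) ^ (-(2 * s)))) := by
  have hB0 : 0 < B := by linarith
  rcases (coverSet B n i).eq_empty_or_nonempty with h | ⟨x, -, hx, -⟩
  · rw [h, Metric.ediam_empty, ENNReal.zero_rpow_of_pos (by linarith)]
    exact zero_le
  refine (ENNReal.rpow_le_rpow (ediam_coverSet_le hB n i) (by linarith)).trans ?_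
  have hM : 0 < B ^ (((n + 2 : ℕ) : ℝ) / 2) := Real.rpow_pos_of_pos hB0 _
  rw [ENNReal.ofReal_rpow_of_nonneg (by positivity) (by linarith),
    ← ENNReal.ofReal_mul (by positivity), ← ENNReal.ofReal_mul (by positivity),
    ← ENNReal.ofReal_mul (by positivity), ← Real.mul_rpow (by positivity) (by positivity),
    ← mul_assoc]
  refine ENNReal.ofReal_le_ofReal (rpow_bound hB hs hs1 ?_ ?_ ?_ ?_)
  · rw [Real.rpow_natCast]; exact hx
  · exact_mod_cast contQ_ofFn_pos i.2.2
  · have hl : ∀ c ∈ List.ofFn fun j => ((i.2.2 j : ℕ)), 1 ≤ c := by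
      simp only [List.mem_ofFn]
      rintro a ⟨j, rfl⟩
      exact (i.2.2 j).pos
    have := mul_contQ_append_le ((List.ofFn fun j => ((i.2.2 j : ℕ))).take i.1)
      ((List.ofFn fun j => ((i.2.2 j : ℕ))).drop i.1) i.2.1.1 i.2.1.2
      (fun c hc => hl c (List.mem_of_mem_take hc)) (fun c hc => hl c (List.mem_of_mem_drop hc))
    rw [List.take_append_drop] at this
    rw [insPair]
    exact_mod_cast this
  · push_cast; linarith

lemma tsum_pnat_rpow_ne_top {t : ℝ} (ht : 1 < t) :
    ∑' a : ℕ+, ENNReal.ofReal (((a : ℕ) : ℝ) ^ (-t)) ≠ ⊤ := by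
  rw [tsum_pnat_eq_tsum_succ (f := fun a : ℕ => ENNReal.ofReal ((a : ℝ) ^ (-t)))]
  refine Summable.tsum_ofReal_ne_top ?_
  rw [summable_nat_add_iff 1 (f := fun a : ℕ => (a : ℝ) ^ (-t)), Real.summable_nat_rpow]
  linarith

lemma exists_tsum_ediam_le {B s : ℝ} (hB : 1 < B) (hs : 1 / 2 < s) (hs1 : s ≤ 1) :
    ∃ C : ℝ≥0∞, C ≠ ⊤ ∧ ∀ n, ∑' i : CoverIdx n, Metric.ediam (coverSet B n i) ^ s ≤
      C * (((n + 1 : ℕ) : ℝ≥0∞) * presSum B s n) := by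
  set Z := ∑' a : ℕ+, ENNReal.ofReal (((a : ℕ) : ℝ) ^ (-(1 + s ^ 2 - s / 2))) with hZ
  have hZt : Z ≠ ⊤ := tsum_pnat_rpow_ne_top (by nlinarith)
  refine ⟨ENNReal.ofReal (4 ^ s) * (Z * Z), by finiteness, fun n => ?_⟩
  refine (ENNReal.tsum_le_tsum fun i => ediam_coverSet_rpow_le hB hs hs1 n i).trans ?_
  rw [ENNReal.tsum_mul_left, ENNReal.tsum_prod (f := fun (_ : Fin (n + 1))
    (i : (ℕ+ × ℕ+) × (Fin n → ℕ+)) =>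
      ENNReal.ofReal (((i.1.1 : ℕ) : ℝ) ^ (-(1 + s ^ 2 - s / 2))) *
        ENNReal.ofReal (((i.1.2 : ℕ) : ℝ) ^ (-(1 + s ^ 2 - s / 2))) *
        ENNReal.ofReal (B ^ (-(n : ℝ) * (3 * s - 1 - s ^ 2)) *
          (contQ (List.ofFn fun j => ((i.2 j : ℕ))) : ℝ) ^ (-(2 * s))))]
  rw [ENNReal.tsum_prod (f := fun (p : ℕ+ × ℕ+) (w : Fin n → ℕ+) =>
      ENNReal.ofReal (((p.1 : ℕ) : ℝ) ^ (-(1 + s ^ 2 - s / 2))) *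
        ENNReal.ofReal (((p.2 : ℕ) : ℝ) ^ (-(1 + s ^ 2 - s / 2))) *
        ENNReal.ofReal (B ^ (-(n : ℝ) * (3 * s - 1 - s ^ 2)) *
          (contQ (List.ofFn fun j => ((w j : ℕ))) : ℝ) ^ (-(2 * s))))]
  simp_rw [ENNReal.tsum_mul_left, ENNReal.tsum_mul_right]
  rw [ENNReal.tsum_prod (f := fun (a b : ℕ+) =>
      ENNReal.ofReal (((a : ℕ) : ℝ) ^ (-(1 + s ^ 2 - s / 2))) *
        ENNReal.ofReal (((b : ℕ) : ℝ) ^ (-(1 + s ^ 2 - s / 2))))]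
  simp_rw [ENNReal.tsum_mul_left, ENNReal.tsum_mul_right]
  rw [tsum_fintype, Finset.sum_const, Finset.card_univ, Fintype.card_fin, nsmul_eq_mul]
  refine le_of_eq ?_
  rw [← hZ, presSum]
  ring

/-- A point with a large product inside its first `n + 2` partial quotients and a large
`a_{n+3}` lies in one of the covering sets. -/
lemma exists_mem_coverSet {B : ℝ} {n k : ℕ} {x : ℝ}
    (hx : x ∈ Set.Ioo (0 : ℝ) 1 ∧ Irrational x) (hk : k ≤ n)
    (h1 : B ^ (n + 2) ≤ (pq x (k + 1) : ℝ) * (pq x (k + 2) : ℝ))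
    (h2 : B ^ (((n + 2 : ℕ) : ℝ) / 2) ≤ pq x (n + 3)) :
    ∃ i : CoverIdx n, x ∈ coverSet B n i := by
  let a : ℕ → ℕ+ := fun j => ⟨pq x (j + 1), pq_pos hx _⟩
  refine ⟨(⟨k, by omega⟩, (a k, a (k + 1)),
    fun j => if (j : ℕ) < k then a j else a (j + 2)), hx, h1, ?_, h2⟩
  refine List.ext_getElem ?_ ?_
  · simp [cfWord, insPair]; omega
  · intro j hj1 hj2
    simp only [cfWord, List.length_map, List.length_range] at hj1
    simp only [cfWord, insPair, List.getElem_map, List.getElem_range]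
    rcases lt_trichotomy j k with h | rfl | h
    · rw [List.getElem_append_left (by simp; omega)]
      simp [h, a]
    · rw [List.getElem_append_right (by simp)]
      simp [hk, a]
    · obtain ⟨j, rfl⟩ := Nat.exists_eq_add_of_lt h
      rw [List.getElem_append_right (by simp; omega)]
      rcases j with _ | j
      · simp [hk, a, add_assoc]
      · simp [hk, a, add_assoc, Nat.add_comm]

/-- If `a_n a_{n+1} ≥ B^n` then one of the two factors is at least `B^{n/2}`. The
letters before that factor form a word of length `m + 2 ∈ {n - 1, n}`, which contains the large
product `a_k a_{k+1}` (with `k = j + 1`). -/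
lemma exists_level {B : ℝ} (hB : 1 < B) {x : ℝ} {n k N : ℕ} (hN : N + 3 ≤ n) (hk1 : 1 ≤ k)
    (hkn : k < n - 1) (h1 : B ^ n ≤ (pq x k : ℝ) * (pq x (k + 1) : ℝ))
    (h2 : B ^ n ≤ (pq x n : ℝ) * (pq x (n + 1) : ℝ)) :
    ∃ m j : ℕ, N ≤ m ∧ j ≤ m ∧ B ^ (m + 2) ≤ (pq x (j + 1) : ℝ) * (pq x (j + 2) : ℝ) ∧
      B ^ (((m + 2 : ℕ) : ℝ) / 2) ≤ pq x (m + 3) := by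
  have hB0 : 0 < B := by linarith
  obtain ⟨j, rfl⟩ := Nat.exists_eq_add_of_le' hk1
  obtain ⟨p, rfl⟩ := Nat.exists_eq_add_of_le' (show 3 ≤ n by omega)
  set M := B ^ (((p + 3 : ℕ) : ℝ) / 2) with hM
  have hM0 : 0 < M := Real.rpow_pos_of_pos hB0 _
  have hMM : M * M = B ^ (p + 3) := by
    rw [hM, ← Real.rpow_add hB0, ← Real.rpow_natCast]
    congr 1
    ring
  by_cases h : M ≤ pq x (p + 3)
  · refine ⟨p, j, by omega, by omega, le_trans ?_ h1, le_trans ?_ h⟩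
    · exact pow_le_pow_right₀ hB.le (by omega)
    · refine Real.rpow_le_rpow_of_exponent_le hB.le ?_
      push_cast
      linarith
  · refine ⟨p + 1, j, by omega, by omega, h1, ?_⟩
    by_contra h'
    push Not at h h'
    have h3 : (0 : ℝ) ≤ pq x (p + 3) := by positivity
    have h4 : (pq x (p + 3) : ℝ) * (pq x (p + 3 + 1) : ℝ) < M * M :=
      mul_lt_mul'' h h' (by positivity) (by positivity)
    linarith

/-- Every `s ∈ (s', 1]`, where `s'` has nonpositive pressure, bounds the dimension: the tails of
the sum over all levels of `∑ diam ^ s` tend to `0`, so the set has zero `s`-dimensional Hausdorff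
measure. -/
theorem dimH_le_of_pressure_le {B s s' : ℝ} (hB : 1 < B) (hs' : 0 ≤ s') (hss : s' < s)
    (hs1 : s ≤ 1) (h : pressure B s' ≤ 0) :
    dimH {x : ℝ | x ∈ Set.Ioo (0 : ℝ) 1 ∧ Irrational x ∧
      {n : ℕ | ∃ k : ℕ, 1 ≤ k ∧ k < n - 1 ∧
        B ^ n ≤ (pq x k : ℝ) * (pq x (k + 1) : ℝ) ∧
        B ^ n ≤ (pq x n : ℝ) * (pq x (n + 1) : ℝ)}.Infinite} ≤ ENNReal.ofReal s := by
  have hs : 1 / 2 < s := (half_lt_of_pressure_le hB hs' h).trans hss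
  have hB0 : 0 < B := by linarith
  obtain ⟨C, hC, hsum⟩ := exists_tsum_ediam_le hB hs hs1
  obtain ⟨δ, hδ, hdec⟩ := exists_presSum_le hB hss hs1 h
  obtain ⟨N₀, hN₀⟩ := eventually_atTop.1 hdec
  -- The level sums from level `N₀` on are dominated by a convergent series `f`.
  let f : ℕ → ℝ≥0∞ := fun n =>
    C * (((n + 1 : ℕ) : ℝ≥0∞) * ENNReal.ofReal (Real.exp (-δ * (n : ℕ))))
  have hf : ∑' n, f n ≠ ⊤ := by
    rw [ENNReal.tsum_mul_left]
    refine ENNReal.mul_ne_top hC ?_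
    have e : ∀ n : ℕ, ((n + 1 : ℕ) : ℝ≥0∞) * ENNReal.ofReal (Real.exp (-δ * (n : ℕ))) =
        ENNReal.ofReal ((n : ℝ) ^ 1 * Real.exp (-δ * n) + (n : ℝ) ^ 0 * Real.exp (-δ * n)) := by
      intro n
      rw [← ENNReal.ofReal_natCast, ← ENNReal.ofReal_mul (by positivity)]
      congr 1
      push_cast
      ring
    simp_rw [e]
    exact ((Real.summable_pow_mul_exp_neg_nat_mul 1 hδ).add
      (Real.summable_pow_mul_exp_neg_nat_mul 0 hδ)).tsum_ofReal_ne_top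
  have htail : Tendsto (fun N => ∑' j, f (j + N)) atTop (nhds 0) :=
    ENNReal.tendsto_sum_nat_add f hf
  have hr : Tendsto (fun N : ℕ => ENNReal.ofReal ((B ^ (((N + 2 : ℕ) : ℝ) / 2))⁻¹)) atTop
      (nhds 0) := by
    rw [← ENNReal.ofReal_zero]
    refine ENNReal.tendsto_ofReal (Tendsto.inv_tendsto_atTop ?_)
    refine (tendsto_rpow_atTop_of_base_gt_one B hB).comp ?_
    refine Tendsto.atTop_div_const (by norm_num) ?_
    exact tendsto_natCast_atTop_atTop.comp (tendsto_add_atTop_nat 2)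
  have hzero := Measure.hausdorffMeasure_le_liminf_tsum (ι := fun N => Σ j, CoverIdx (j + N)) s
    {x : ℝ | x ∈ Set.Ioo (0 : ℝ) 1 ∧ Irrational x ∧
      {n : ℕ | ∃ k : ℕ, 1 ≤ k ∧ k < n - 1 ∧
        B ^ n ≤ (pq x k : ℝ) * (pq x (k + 1) : ℝ) ∧
        B ^ n ≤ (pq x n : ℝ) * (pq x (n + 1) : ℝ)}.Infinite}
    _ hr (fun N i => coverSet B (i.1 + N) i.2) ?_ ?_
  rotate_left
  · refine Eventually.of_forall fun N i => (ediam_coverSet_le' hB _ _).trans ?_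
    refine ENNReal.ofReal_le_ofReal (inv_anti₀ (Real.rpow_pos_of_pos hB0 _) ?_)
    refine Real.rpow_le_rpow_of_exponent_le hB.le ?_
    push_cast
    have : (0 : ℝ) ≤ i.1 := by positivity
    linarith
  · refine Eventually.of_forall fun N => ?_
    rintro x ⟨hx0, hxi, hinf⟩
    obtain ⟨n, ⟨k, hk1, hkn, h1, h2⟩, hn⟩ := hinf.exists_gt (N + 3)
    obtain ⟨m, j, hm, hj, h3, h4⟩ := exists_level hB hn.le hk1 hkn h1 h2
    obtain ⟨d, rfl⟩ := Nat.exists_eq_add_of_le' hm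
    obtain ⟨i, hi⟩ := exists_mem_coverSet ⟨hx0, hxi⟩ hj h3 h4
    exact Set.mem_iUnion.2 ⟨⟨d, i⟩, hi⟩
  have hlim : Tendsto (fun N => ∑' i : Σ j, CoverIdx (j + N),
      Metric.ediam (coverSet B (i.1 + N) i.2) ^ s) atTop (nhds 0) := by
    refine tendsto_of_tendsto_of_tendsto_of_le_of_le' tendsto_const_nhds htail
      (Eventually.of_forall fun _ => zero_le) ?_
    filter_upwards [eventually_ge_atTop N₀] with N hN
    rw [ENNReal.tsum_sigma (fun j i => Metric.ediam (coverSet B (j + N) i) ^ s)]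
    refine ENNReal.tsum_le_tsum fun j => (hsum (j + N)).trans ?_
    simp only [f]
    gcongr
    exact hN₀ (j + N) (by omega)
  rw [hlim.liminf_eq] at hzero
  refine dimH_le_of_hausdorffMeasure_ne_top (d := s.toNNReal) ?_
  rw [Real.coe_toNNReal s (by linarith)]
  exact ne_top_of_le_ne_top ENNReal.zero_ne_top hzero

theorem dimH_frakF2_le (B : ℝ) (hB : 1 < B) :
    dimH {x : ℝ | x ∈ Set.Ioo (0 : ℝ) 1 ∧ Irrational x ∧
      {n : ℕ | ∃ k : ℕ, 1 ≤ k ∧ k < n - 1 ∧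
        B ^ n ≤ (pq x k : ℝ) * (pq x (k + 1) : ℝ) ∧
        B ^ n ≤ (pq x n : ℝ) * (pq x (n + 1) : ℝ)}.Infinite} ≤
      ENNReal.ofReal (sB B) := by
  rcases le_or_gt 1 (sB B) with h1 | h1
  · refine (dimH_mono (Set.subset_univ _)).trans ?_
    rw [Real.dimH_univ]
    exact ENNReal.one_le_ofReal.2 h1
  have hlim : Tendsto (fun s : ℝ => ENNReal.ofReal s) (nhdsWithin (sB B) (Set.Ioi (sB B)))
      (nhds (ENNReal.ofReal (sB B))) :=
    ENNReal.continuous_ofReal.continuousAt.tendsto.mono_left nhdsWithin_le_nhds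
  refine ge_of_tendsto hlim ?_
  filter_upwards [Ioo_mem_nhdsGT h1] with s hs
  -- The infimum defining `sB` is over a nonempty set, so it is approached by its members.
  have hne : {s : ℝ | 0 ≤ s ∧ pressure B s ≤ 0}.Nonempty := ⟨1, zero_le_one, pressure_one_le hB⟩
  obtain ⟨s', ⟨hs'0, hs'⟩, hlt⟩ := exists_lt_of_csInf_lt hne (show sInf _ < s from hs.1)
  exact dimH_le_of_pressure_le hB hs'0 hlt hs.2.le hs'
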